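/- arXiv:1809.05004 — 6 statements merged into one kernel-verified Lean document; each statement's English description precedes it below -/
import Mathlib

section
/- Let θ be a regular cardinal, let R = (X, Y, ⊏) be a relational system, and let F ⊆ X be a strongly θ-R-unbounded family with |F| = θ. Then F is a strongly θ-R^⊥-dominating family, where R^⊥ := (Y, X, ⊏^⊥) is the dual relational system with y ⊏^⊥ x iff ¬(x ⊏ y). -/
universe u

/-!
Strong `θ`-unboundedness of `F` says that `#F ≥ θ` and that, for each `y`, the points of `F` not
related to `y` form a set of the filter of sets with complement of size `< θ`. As `θ` is regular,
this filter is closed under intersections of fewer than `θ` sets, and as `#F ≥ θ`, it is proper.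
Index `F` by the pairs `(s, x)` with `s` in the filter and `x ∈ s`, ordered by reverse inclusion of
the first coordinate: as for the usual net of a filter, the points `x` are eventually in every set
of the filter.
-/

open Filter Set
open scoped Cardinal

universe v

/-- `F` is strongly `θ`-`R`-unbounded, for the relational system given by `R : X → Y → Prop`. -/
def IsStronglyUnbounded {X : Type u} {Y : Type v} (R : X → Y → Prop) (θ : Cardinal.{u})
    (F : Set X) : Prop :=
  θ ≤ #F ∧ ∀ y, #{x // x ∈ F ∧ R x y} < θ

/-- `D` is strongly `θ`-`R`-dominating: it is the range of a net that is indexed by a `<θ`-directed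
partial order and eventually `R`-dominates each `x : X`. The index set lives in the universe of
`Y`. -/
def IsStronglyDominating {X : Type v} {Y : Type u} (R : X → Y → Prop) (θ : Cardinal.{u})
    (D : Set Y) : Prop :=
  ∃ (L : Type u) (le : L → L → Prop), IsPartialOrder L le ∧
    (∀ S : Set L, #S < θ → ∃ b, ∀ l ∈ S, le l b) ∧
    ∃ a : L → Y, D = range a ∧ ∀ x, ∃ l₀, ∀ l, le l₀ l → R x (a l)

/-- A set of the filter `f` with a chosen point in it: the indices of the canonical net of `f`. -/
structure PointedMem {α : Type u} (f : Filter α) where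
  carrier : Set α
  carrier_mem : carrier ∈ f
  point : α
  point_mem : point ∈ carrier

namespace PointedMem

variable {α : Type u} {f : Filter α}

/-- Reverse *strict* inclusion of carriers, or equality: comparing carriers by `⊇` alone would not
be antisymmetric, since the chosen points may differ. -/
instance : PartialOrder (PointedMem f) where
  le p q := p = q ∨ q.carrier ⊂ p.carrier
  le_refl _ := .inl rfl
  le_trans := by
    rintro p q r (rfl | hqp) (rfl | hrq)
    exacts [.inl rfl, .inr hrq, .inr hqp, .inr (hrq.trans hqp)]
  le_antisymm := by
    rintro p q (rfl | hqp) (hqp' | hpq)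
    exacts [rfl, rfl, hqp'.symm, (hqp.asymm hpq).elim]

theorem le_of_ssubset {p q : PointedMem f} (h : q.carrier ⊂ p.carrier) : p ≤ q := .inr h

theorem carrier_antitone : Antitone (carrier : PointedMem f → Set α) := by
  rintro p q (rfl | hqp)
  exacts [Subset.rfl, hqp.subset]

theorem point_surjective : Function.Surjective (point : PointedMem f → α) := fun x =>
  ⟨⟨univ, univ_mem, x, mem_univ x⟩, rfl⟩

theorem exists_forall_ge_point_mem [f.NeBot] {s : Set α} (hs : s ∈ f) :
    ∃ p : PointedMem f, ∀ q ≥ p, q.point ∈ s := by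
  obtain ⟨x, hx⟩ := Filter.nonempty_of_mem hs
  exact ⟨⟨s, hs, x, hx⟩, fun q hpq => carrier_antitone hpq q.point_mem⟩

theorem bddAbove_of_mk_lt {θ : Cardinal.{u}} [CardinalInterFilter f θ] [f.NeBot]
    (hf : f ≤ cofinite) {S : Set (PointedMem f)} (hS : #S < θ) : BddAbove S := by
  -- Removing the chosen points makes the inclusions between carriers strict.
  have hmem : (⋂ p ∈ S, p.carrier \ {p.point}) ∈ f := (cardinal_bInter_mem hS).2 fun p _ =>
    inter_mem p.carrier_mem (hf (finite_singleton p.point).compl_mem_cofinite)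
  obtain ⟨x, hx⟩ := Filter.nonempty_of_mem hmem
  refine ⟨⟨_, hmem, x, hx⟩, fun p hp => le_of_ssubset ?_⟩
  calc
    ⋂ p ∈ S, p.carrier \ {p.point} ⊆ p.carrier \ {p.point} := biInter_subset_of_mem hp
    _ ⊂ p.carrier := sdiff_singleton_ssubset.2 p.point_mem

end PointedMem

section Cocardinal

variable {α : Type u} {θ : Cardinal.{u}}

theorem cocardinal_le_cofinite (hθ : θ.IsRegular) : cocardinal α hθ ≤ cofinite :=
  le_cofinite_iff_eventually_ne.2 eventually_cocardinal_ne

theorem cocardinal_neBot (hθ : θ.IsRegular) (hα : θ ≤ #α) : (cocardinal α hθ).NeBot := by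
  rwa [← inf_top_eq (cocardinal α hθ), ← principal_univ, cocardinal_inf_principal_neBot_iff,
    Cardinal.mk_univ]

end Cocardinal

section RelationalSystem

variable {X : Type u} {Y : Type v} {R : X → Y → Prop} {θ : Cardinal.{u}} {F : Set X}

theorem IsStronglyUnbounded.eventually_not_rel (hF : IsStronglyUnbounded R θ F)
    (hθ : θ.IsRegular) (y : Y) : ∀ᶠ x : F in cocardinal F hθ, ¬ R x y := by
  simp only [eventually_cocardinal, not_not]
  exact (Equiv.subtypeSubtypeEquivSubtypeInter (· ∈ F) (R · y)).cardinal_eq.trans_lt (hF.2 y)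

theorem stmt_2_general (hθ : θ.IsRegular) (hF : IsStronglyUnbounded R θ F) :
    IsStronglyDominating (fun y x => ¬ R x y) θ F := by
  have : (cocardinal F hθ).NeBot := cocardinal_neBot hθ hF.1
  refine ⟨PointedMem (cocardinal F hθ), (· ≤ ·), inferInstance, fun S hS => ?directed,
    fun p => p.point, ?range, fun y => ?eventually⟩
  case directed => exact PointedMem.bddAbove_of_mk_lt (cocardinal_le_cofinite hθ) hS
  case range => exact ((PointedMem.point_surjective.range_comp _).trans Subtype.range_coe).symm
  case eventually => exact PointedMem.exists_forall_ge_point_mem (hF.eventually_not_rel hθ y)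

end RelationalSystem

/-- Let `θ` be a regular cardinal, `R = (X, Y, ⊏)` a relational system,
and `F ⊆ X` a strongly `θ`-`R`-unbounded family with `|F| = θ`. Then `F` is a strongly
`θ`-`R^⊥`-dominating family, where `R^⊥ = (Y, X, ⊏^⊥)` with `y ⊏^⊥ x` iff `¬(x ⊏ y)`:
there are a `<θ`-directed partial order `(L, ⊴)` and an indexed family `(a_l)_{l ∈ L}`
with `F = {a_l : l ∈ L}` such that for every `y ∈ Y` there is `l₀ ∈ L` with
`¬ (a_l ⊏ y)` for every `l ⊵ l₀`. -/
theorem stmt_2 {X Y : Type u} (R : X → Y → Prop) (θ : Cardinal.{u})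
    (hreg : θ.IsRegular) (F : Set X)
    (hFcard : Cardinal.mk F = θ)
    (hstrong : ∀ y : Y, Cardinal.mk {x : X // x ∈ F ∧ R x y} < θ) :
    ∃ (L : Type u) (le : L → L → Prop), IsPartialOrder L le ∧
      (∀ S : Set L, Cardinal.mk S < θ → ∃ u0 : L, ∀ l ∈ S, le l u0) ∧
      ∃ a : L → X, F = Set.range a ∧
        ∀ y : Y, ∃ l0 : L, ∀ l : L, le l0 l → ¬ R (a l) y := by
  exact stmt_2_general hreg ⟨hFcard.ge, hstrong⟩
end

section
/- Let P be a preorder and let Q ⊆ P be an Fr-linked subset. Then Q contains no infinite antichain of P, i.e., every set of pairwise incompatible conditions contained in Q is finite. -/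
universe u

/-- Two conditions of a preorder are compatible if they have a common extension. -/
def Compat {P : Type u} [Preorder P] (p q : P) : Prop := ∃ r : P, r ≤ p ∧ r ≤ q

/-- `Q ⊆ P` is Frechet-linked: for every sequence `(p_n)` in `Q` there is `q ∈ P` such
that for every `r ≤ q` the set `{n : r compatible with p_n}` is infinite. -/
def FrLinked {P : Type u} [Preorder P] (Q : Set P) : Prop :=
  ∀ p : ℕ → P, (∀ n, p n ∈ Q) →
    ∃ q : P, ∀ r : P, r ≤ q → {n : ℕ | Compat r (p n)}.Infinite

section

variable {P : Type u} [Preorder P]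

theorem Compat.mono_left {p p' q : P} (hp : p ≤ p') : Compat p q → Compat p' q
  | ⟨r, hrp, hrq⟩ => ⟨r, hrp.trans hp, hrq⟩

theorem FrLinked.exists_infinite_setOf_compat {Q : Set P} (hQ : FrLinked Q) {p : ℕ → P}
    (hp : ∀ n, p n ∈ Q) : ∃ n, {m | Compat (p n) (p m)}.Infinite := by
  obtain ⟨q, hq⟩ := hQ p hp
  obtain ⟨n, r, hrq, hrn⟩ := (hq q le_rfl).nonempty
  exact ⟨n, (hq r hrq).mono fun _ ↦ Compat.mono_left hrn⟩

end

/-- Let `P` be a preorder and `Q ⊆ P` an Fr-linked subset. Then `Q`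
contains no infinite antichain of `P`: every set of pairwise incompatible conditions
contained in `Q` is finite. -/
theorem stmt_6 {P : Type u} [Preorder P] (Q : Set P) (hQ : FrLinked Q) :
    ∀ A : Set P, A ⊆ Q → (∀ p ∈ A, ∀ q ∈ A, p ≠ q → ¬ Compat p q) → A.Finite := by
  intro A hAQ hA
  by_contra hA_inf
  let f : ℕ ↪ A := Set.Infinite.natEmbedding A hA_inf
  obtain ⟨n, hn⟩ := hQ.exists_infinite_setOf_compat fun k ↦ hAQ (f k).2
  obtain ⟨m, hnm, hmn⟩ := hn.exists_notMem_finite (Set.finite_singleton n)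
  have hne : (f n : P) ≠ f m := fun h ↦ hmn (f.injective (Subtype.ext h)).symm
  exact hA (f n) (f n).2 (f m) (f m).2 hne hnm
end

section
/- Let (Ω, Σ, μ) be a probability space, let δ > 0, and let (A_n)_{n∈ℕ} be a sequence of measurable sets with μ(A_n) ≥ δ for all n. Then Q := limsup_n A_n = ⋂_m ⋃_{n≥m} A_n satisfies μ(Q) ≥ δ, and for every measurable R ⊆ Q with μ(R) > 0 the set {n ∈ ℕ : μ(R ∩ A_n) > 0} is infinite. (This witnesses that in random forcing the set of conditions of measure ≥ δ is Frechet-linked, so random forcing is σ-Fr-linked, hence σ-uf-linked.) -/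
open MeasureTheory
open scoped ENNReal

/-!
Every tail union `⋃_{n ≥ m} A_n` contains some `A_n` of measure at least `δ`, and these unions
decrease to `Q`, so continuity from above gives `μ Q ≥ δ`. If `R ∩ A_n` were null for all `n ≥ m`,
then `R`, being covered by these countably many sets, would be null as well.
-/

section

open Filter

variable {Ω ι : Type*} [MeasurableSpace Ω] {μ : Measure Ω} [Countable ι] {l : Filter ι}
  {A : ι → Set Ω}

theorem limsup_measure_le_measure_limsup [l.IsCountablyGenerated]
    (hmeas : ∀ i, NullMeasurableSet (A i) μ) (hfin : ∃ t ∈ l, μ (⋃ i ∈ t, A i) ≠ ∞) :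
    limsup (fun i => μ (A i)) l ≤ μ (limsup A l) := by
  obtain ⟨s, hs⟩ := l.exists_antitone_basis
  have limsup_eq : limsup A l = ⋂ n, ⋃ i ∈ s n, A i :=
    hs.toHasBasis.limsup_eq_iInf_iSup.trans (iInf_congr fun _ => iInf_true)
  have tails_antitone : Antitone fun n => ⋃ i ∈ s n, A i := fun _ _ hmn =>
    Set.biUnion_subset_biUnion_left (hs.antitone hmn)
  have tails_measurable (n : ℕ) : NullMeasurableSet (⋃ i ∈ s n, A i) μ :=
    .biUnion (s n).to_countable fun i _ => hmeas i
  have tail_finite : ∃ n, μ (⋃ i ∈ s n, A i) ≠ ∞ := by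
    obtain ⟨t, ht, hμt⟩ := hfin
    obtain ⟨n, hn⟩ := hs.mem_iff.mp ht
    exact ⟨n, measure_ne_top_of_subset (Set.biUnion_subset_biUnion_left hn) hμt⟩
  rw [limsup_eq, tails_antitone.measure_iInter tails_measurable tail_finite]
  refine le_iInf fun n => limsup_le_of_le (h := ?_)
  filter_upwards [hs.mem n] with i hi
  exact measure_mono (Set.subset_biUnion_of_mem hi)

theorem frequently_measure_inter_pos_of_subset_limsup {R : Set Ω} (hR : R ⊆ limsup A l)
    (hμR : 0 < μ R) : ∃ᶠ i in l, 0 < μ (R ∩ A i) := by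
  by_contra hfreq
  have eventually_null : ∀ᶠ i in l, μ (R ∩ A i) = 0 := by
    simpa only [not_frequently, not_lt, nonpos_iff_eq_zero] using hfreq
  have ae_notMem_inter : ∀ᵐ x ∂μ, ∀ i, μ (R ∩ A i) = 0 → x ∉ R ∩ A i :=
    ae_all_iff.mpr fun _ =>
      eventually_imp_distrib_left.mpr measure_eq_zero_iff_ae_notMem.mp
  have ae_notMem_R : ∀ᵐ x ∂μ, x ∉ R := by
    filter_upwards [ae_notMem_inter] with x hx hxR
    exact mem_limsup_iff_frequently_mem.mp (hR hxR)
      (eventually_null.mono fun i hi hxi => hx i hi ⟨hxR, hxi⟩)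
  exact hμR.ne' (measure_eq_zero_iff_ae_notMem.mpr ae_notMem_R)

theorem stmt_7_general [l.IsCountablyGenerated] {δ : ℝ≥0∞}
    (hmeas : ∀ i, NullMeasurableSet (A i) μ) (hfin : ∃ t ∈ l, μ (⋃ i ∈ t, A i) ≠ ∞)
    (hA : ∃ᶠ i in l, δ ≤ μ (A i)) :
    δ ≤ μ (limsup A l) ∧
    ∀ R ⊆ limsup A l, 0 < μ R → ∃ᶠ i in l, 0 < μ (R ∩ A i) :=
  ⟨(le_limsup_of_frequently_le hA).trans (limsup_measure_le_measure_limsup hmeas hfin),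
    fun _ => frequently_measure_inter_pos_of_subset_limsup⟩

end

/-- Let `(Ω, Σ, μ)` be a probability space, `δ > 0`, and `(A_n)` a
sequence of measurable sets with `μ(A_n) ≥ δ` for all `n`. Then
`Q := limsup_n A_n = ⋂_m ⋃_{n ≥ m} A_n` satisfies `μ(Q) ≥ δ`, and for every measurable
`R ⊆ Q` with `μ(R) > 0` the set `{n : μ(R ∩ A_n) > 0}` is infinite. -/
theorem stmt_7 {Ω : Type*} [MeasurableSpace Ω] (μ : Measure Ω) [IsProbabilityMeasure μ]
    (δ : ℝ≥0∞) (hδ : 0 < δ) (A : ℕ → Set Ω) (hmeas : ∀ n, MeasurableSet (A n))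
    (hA : ∀ n, δ ≤ μ (A n)) :
    δ ≤ μ (⋂ m, ⋃ n, ⋃ (_ : m ≤ n), A n) ∧
    ∀ R : Set Ω, MeasurableSet R → R ⊆ (⋂ m, ⋃ n, ⋃ (_ : m ≤ n), A n) → 0 < μ R →
      {n : ℕ | 0 < μ (R ∩ A n)}.Infinite := by
  have limsup_eq : Filter.limsup A .atTop = ⋂ m, ⋃ n, ⋃ (_ : m ≤ n), A n :=
    Filter.limsup_eq_iInf_iSup_of_nat
  obtain ⟨hQ, hR⟩ := stmt_7_general (l := .atTop) (fun n => (hmeas n).nullMeasurableSet)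
    ⟨_, Filter.univ_mem, measure_ne_top μ _⟩ (.of_forall hA)
  rw [← limsup_eq]
  exact ⟨hQ, fun R _ hRQ hμR => Nat.frequently_atTop_iff_infinite.mp (hR R hRQ hμR)⟩
end

section
/- Let k ≥ 1 be a natural number and let (I_n)_{n∈ℕ} be a sequence of nonempty finite pairwise disjoint subsets of {i ∈ ℕ : i ≥ k} whose union is {i ∈ ℕ : i ≥ k}, and assume ∑_{n∈ℕ} 2^{-|I_n|} < 1. For each n set A_n := {x ∈ 2^ω : if x(i) = 0 for all i < k, then x(i) = 0 for all i ∈ I_n}. Then λ(A_n) = 1 − 2^{−k} + 2^{−k−|I_n|} for every n, and λ(⋃_n A_n) ≤ 1 − 2^{−k} + 2^{−k}·∑_n 2^{-|I_n|} < 1; in particular there is a set of positive measure disjoint from every A_n. (This witnesses that the ultrafilter-limit property of Lemma ‘EDuflim’ fails for random forcing: some condition forces that no p_n lies in the generic filter, even though the D-limit of the corresponding conditions is the trivial condition.) -/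
open scoped ENNReal

/-- The sets witnessing failure of ultrafilter limits for random forcing:
`A_n := {x ∈ 2^ω : if x(i) = 0 for all i < k, then x(i) = 0 for all i ∈ I_n}`. -/
def badSet (k : ℕ) (I : ℕ → Finset ℕ) (n : ℕ) : Set (ℕ → Bool) :=
  {x | (∀ i < k, x i = false) → ∀ i ∈ I n, x i = false}

/-!
Write `P` for the event that `x` vanishes below `k` and `Q n` for the event that `x` vanishes on
`I n`. Then `A n` is the implication `P ⇨ Q n`, the disjoint union of `Pᶜ` and `P ∩ Q n`. All the
`A n` share the part `Pᶜ`, so it is paid for only once in the union bound: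
`μ (⋃ n, A n) ≤ 1 - μ P + ∑ n, μ (P ∩ Q n)`. Since `P` and `Q n` depend on disjoint sets of
coordinates, `∑ n, μ (P ∩ Q n)` is `μ P` times `∑ n, 2⁻¹ ^ |I n| < 1`.
-/

open MeasureTheory

lemma himp_eq_compl_union_inter {Ω : Type*} (P Q : Set Ω) : P ⇨ Q = Pᶜ ∪ P ∩ Q := by
  rw [Set.union_inter_distrib_left, Set.compl_union_self, Set.univ_inter, Set.union_comm,
    Set.himp_def]

section ProbHimp

variable {Ω ι : Type*} [MeasurableSpace Ω] {μ : Measure Ω} [IsProbabilityMeasure μ] {P : Set Ω}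

lemma prob_himp (hP : MeasurableSet P) (Q : Set Ω) : μ (P ⇨ Q) = 1 - μ P + μ (P ∩ Q) := by
  have hdisj : Disjoint Pᶜ (P ∩ Q) := disjoint_compl_left.mono_right Set.inter_subset_left
  rw [himp_eq_compl_union_inter, measure_union' hdisj hP.compl, prob_compl_eq_one_sub hP]

lemma prob_iUnion_himp_le [Countable ι] (hP : MeasurableSet P) (Q : ι → Set Ω) :
    μ (⋃ n, (P ⇨ Q n)) ≤ 1 - μ P + ∑' n, μ (P ∩ Q n) :=
  calc μ (⋃ n, (P ⇨ Q n))
    _ ≤ μ (Pᶜ ∪ ⋃ n, P ∩ Q n) := by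
        refine measure_mono (Set.iUnion_subset fun n ↦ ?_)
        rw [himp_eq_compl_union_inter]
        exact Set.union_subset_union_right _ (Set.subset_iUnion (fun n ↦ P ∩ Q n) n)
    _ ≤ μ Pᶜ + μ (⋃ n, P ∩ Q n) := measure_union_le _ _
    _ ≤ μ Pᶜ + ∑' n, μ (P ∩ Q n) := by gcongr; exact measure_iUnion_le _
    _ = 1 - μ P + ∑' n, μ (P ∩ Q n) := by rw [prob_compl_eq_one_sub hP]

lemma prob_iUnion_himp_lt_one [Countable ι] (hP : MeasurableSet P) {Q : ι → Set Ω}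
    (hsum : ∑' n, μ (P ∩ Q n) < μ P) : μ (⋃ n, (P ⇨ Q n)) < 1 :=
  calc μ (⋃ n, (P ⇨ Q n))
    _ ≤ 1 - μ P + ∑' n, μ (P ∩ Q n) := prob_iUnion_himp_le hP Q
    _ < 1 - μ P + μ P := ENNReal.add_lt_add_left (by finiteness) hsum
    _ = 1 := tsub_add_cancel_of_le prob_le_one

lemma exists_measurableSet_pos_disjoint_of_prob_lt_one {A : Set Ω} (hA : μ A < 1) :
    ∃ R, MeasurableSet R ∧ 0 < μ R ∧ Disjoint R A := by
  have hmeas : MeasurableSet (toMeasurable μ A) := measurableSet_toMeasurable μ A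
  refine ⟨(toMeasurable μ A)ᶜ, hmeas.compl, ?_,
    disjoint_compl_left.mono_right (subset_toMeasurable μ A)⟩
  rw [prob_compl_eq_one_sub hmeas, measure_toMeasurable]
  exact tsub_pos_of_lt hA

end ProbHimp

/-- The cylinder of all `x` that agree with `f` on the finite set `u` of coordinates. Each `badSet`
is the implication between two of these with `f = 0`. Taking `f` defined on all of `α` avoids
partial functions; only its values on `u` matter. -/
def agreementCylinder {α β : Type*} (f : α → β) (u : Finset α) : Set (α → β) :=
  {x | ∀ i ∈ u, x i = f i}

section AgreementCylinder

variable {α β : Type*} (f : α → β)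

lemma agreementCylinder_eq_pi (u : Finset α) :
    agreementCylinder f u = (u : Set α).pi fun i ↦ {f i} :=
  rfl

lemma measurableSet_agreementCylinder [MeasurableSpace β] [MeasurableSingletonClass β]
    (u : Finset α) : MeasurableSet (agreementCylinder f u) :=
  .pi u.countable_toSet fun i _ ↦ .singleton (f i)

lemma agreementCylinder_inter_of_disjoint {u v : Finset α} (huv : Disjoint u v) :
    agreementCylinder f u ∩ agreementCylinder f v = agreementCylinder f (u.disjUnion v huv) := by
  simp only [agreementCylinder_eq_pi, Finset.coe_disjUnion, Set.union_pi]

end AgreementCylinder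

/-- `μ` is the fair coin-flipping measure on `α → Bool`, characterized by its values on
cylinders: prescribing the values at finitely many coordinates costs a factor `2⁻¹` for each. -/
def IsCoinFlipping {α : Type*} (μ : Measure (α → Bool)) : Prop :=
  ∀ (u : Finset α) (f : α → Bool), μ (agreementCylinder f u) = (2 : ℝ≥0∞)⁻¹ ^ u.card

namespace IsCoinFlipping

variable {α ι : Type*} {μ : Measure (α → Bool)}

lemma isProbabilityMeasure (hμ : IsCoinFlipping μ) : IsProbabilityMeasure μ :=
  ⟨by simpa [agreementCylinder] using hμ ∅ fun _ ↦ false⟩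

lemma measure_inter_of_disjoint (hμ : IsCoinFlipping μ) (f : α → Bool) {u v : Finset α}
    (huv : Disjoint u v) :
    μ (agreementCylinder f u ∩ agreementCylinder f v) = (2 : ℝ≥0∞)⁻¹ ^ (u.card + v.card) := by
  rw [agreementCylinder_inter_of_disjoint f huv, hμ, Finset.card_disjUnion]

lemma tsum_measure_inter (hμ : IsCoinFlipping μ) (f : α → Bool) {u : Finset α}
    {I : ι → Finset α} (hdisj : ∀ n, Disjoint u (I n)) :
    ∑' n, μ (agreementCylinder f u ∩ agreementCylinder f (I n)) =
      (2 : ℝ≥0∞)⁻¹ ^ u.card * ∑' n, (2 : ℝ≥0∞)⁻¹ ^ (I n).card := by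
  simp only [hμ.measure_inter_of_disjoint f (hdisj _), pow_add, ENNReal.tsum_mul_left]

lemma tsum_measure_inter_lt (hμ : IsCoinFlipping μ) (f : α → Bool) {u : Finset α}
    {I : ι → Finset α} (hdisj : ∀ n, Disjoint u (I n))
    (hsum : ∑' n, (2 : ℝ≥0∞)⁻¹ ^ (I n).card < 1) :
    ∑' n, μ (agreementCylinder f u ∩ agreementCylinder f (I n)) < μ (agreementCylinder f u) := by
  have hpos : (2 : ℝ≥0∞)⁻¹ ^ u.card ≠ 0 := by simp
  have hfin : (2 : ℝ≥0∞)⁻¹ ^ u.card ≠ ∞ := by finiteness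
  rw [hμ.tsum_measure_inter f hdisj, hμ]
  simpa only [mul_one] using ENNReal.mul_lt_mul_right hpos hfin hsum

end IsCoinFlipping

theorem stmt_11_general {α ι : Type*} [Countable ι] {μ : Measure (α → Bool)}
    (hμ : IsCoinFlipping μ) (f : α → Bool) (u : Finset α) (I : ι → Finset α)
    (hdisj : ∀ n, Disjoint u (I n)) (hsum : ∑' n, (2 : ℝ≥0∞)⁻¹ ^ (I n).card < 1) :
    (∀ n, μ (agreementCylinder f u ⇨ agreementCylinder f (I n)) =
      1 - (2 : ℝ≥0∞)⁻¹ ^ u.card + (2 : ℝ≥0∞)⁻¹ ^ (u.card + (I n).card)) ∧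
    μ (⋃ n, (agreementCylinder f u ⇨ agreementCylinder f (I n))) ≤
      1 - (2 : ℝ≥0∞)⁻¹ ^ u.card + (2 : ℝ≥0∞)⁻¹ ^ u.card * ∑' n, (2 : ℝ≥0∞)⁻¹ ^ (I n).card ∧
    μ (⋃ n, (agreementCylinder f u ⇨ agreementCylinder f (I n))) < 1 ∧
    ∃ R : Set (α → Bool), MeasurableSet R ∧ 0 < μ R ∧
      ∀ n, Disjoint R (agreementCylinder f u ⇨ agreementCylinder f (I n)) := by
  have := hμ.isProbabilityMeasure
  have hmeas := measurableSet_agreementCylinder f u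
  have hlt := prob_iUnion_himp_lt_one hmeas (hμ.tsum_measure_inter_lt f hdisj hsum)
  refine ⟨fun n ↦ ?_, ?_, hlt, ?_⟩
  · rw [prob_himp hmeas, hμ.measure_inter_of_disjoint f (hdisj n), hμ]
  · simpa only [hμ.tsum_measure_inter f hdisj, hμ u f] using
      prob_iUnion_himp_le (μ := μ) hmeas fun n ↦ agreementCylinder f (I n)
  · simpa only [Set.disjoint_iUnion_right] using
      exists_measurableSet_pos_disjoint_of_prob_lt_one hlt

lemma badSet_eq_himp (k : ℕ) (I : ℕ → Finset ℕ) (n : ℕ) :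
    badSet k I n = agreementCylinder (fun _ ↦ false) (Finset.range k) ⇨
      agreementCylinder (fun _ ↦ false) (I n) := by
  ext x
  simp only [badSet, agreementCylinder, Set.mem_himp_iff, Set.mem_ofPred_eq, Finset.mem_range]

/-- Let `k ≥ 1` and let `(I_n)` be a sequence of nonempty finite
pairwise disjoint subsets of `{i : i ≥ k}` whose union is `{i : i ≥ k}`, with
`∑_n 2^{-|I_n|} < 1`. Let `λ` be the uniform coin-flipping measure on Cantor space
(characterized by its values on cylinders). Then `λ(A_n) = 1 - 2^{-k} + 2^{-k-|I_n|}`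
for every `n`, `λ(⋃_n A_n) ≤ 1 - 2^{-k} + 2^{-k}·∑_n 2^{-|I_n|} < 1`, and in particular
there is a measurable set of positive measure disjoint from every `A_n`. -/
theorem stmt_11 (μ : MeasureTheory.Measure (ℕ → Bool))
    (hcyl : ∀ (u : Finset ℕ) (f : ℕ → Bool),
      μ {x : ℕ → Bool | ∀ i ∈ u, x i = f i} = (2 : ℝ≥0∞)⁻¹ ^ u.card)
    (k : ℕ) (hk : 1 ≤ k) (I : ℕ → Finset ℕ)
    (hne : ∀ n, (I n).Nonempty)
    (hsub : ∀ n, ∀ i ∈ I n, k ≤ i)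
    (hdisj : ∀ m n, m ≠ n → Disjoint (I m) (I n))
    (hunion : (⋃ n : ℕ, ((I n : Finset ℕ) : Set ℕ)) = {i : ℕ | k ≤ i})
    (hsum : ∑' n : ℕ, (2 : ℝ≥0∞)⁻¹ ^ (I n).card < 1) :
    (∀ n : ℕ, μ (badSet k I n) = 1 - (2 : ℝ≥0∞)⁻¹ ^ k + (2 : ℝ≥0∞)⁻¹ ^ (k + (I n).card)) ∧
    μ (⋃ n : ℕ, badSet k I n) ≤
      1 - (2 : ℝ≥0∞)⁻¹ ^ k + (2 : ℝ≥0∞)⁻¹ ^ k * ∑' n : ℕ, (2 : ℝ≥0∞)⁻¹ ^ (I n).card ∧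
    μ (⋃ n : ℕ, badSet k I n) < 1 ∧
    ∃ R : Set (ℕ → Bool), MeasurableSet R ∧ 0 < μ R ∧ ∀ n : ℕ, Disjoint R (badSet k I n) := by
  have hrange (n : ℕ) : Disjoint (Finset.range k) (I n) :=
    Finset.disjoint_left.2 fun i hi hin ↦ (Finset.mem_range.1 hi).not_ge (hsub n i hin)
  simpa only [badSet_eq_himp, Finset.card_range] using
    stmt_11_general hcyl (fun _ ↦ false) (Finset.range k) I hrange hsum
end

section
/- Let μ be an infinite cardinal and let (Q_i)_{i∈I} be a family of preorders, each with a greatest element, with |I| ≤ 2^μ. Suppose each Q_i is μ-Fr-linked as witnessed by a covering Q_i = ⋃_{ζ<μ} Q_{i,ζ} by Fr-linked sets, and suppose that for every finite u ⊆ I and every s : u → μ the set ∏_{i∈u} Q_{i,s(i)} is Fr-linked in ∏_{i∈u} Q_i (ordered coordinatewise). Then the finite-support product of (Q_i)_{i∈I} is μ-Fr-linked. -/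
universe u

/-- `P` is `μ`-Fr-linked: `P` is the union of at most `μ` many Fr-linked subsets. -/
def MuFrLinked (μ : Cardinal.{u}) (P : Type u) [Preorder P] : Prop :=
  ∃ 𝒬 : Set (Set P), Cardinal.mk 𝒬 ≤ μ ∧ ⋃₀ 𝒬 = Set.univ ∧ ∀ Q ∈ 𝒬, FrLinked Q

/-!
A condition of the finite-support product lies in a box, given by a bound on the size of its support
and a function `h : I → Z` with `f i ∈ K i (h i)` on the support. By the Engelking–Karłowicz
theorem, `μ` many functions `h` suffice to extend all finite partial functions from `I` to `Z`, so
`μ` many boxes cover the product. A box is Fr-linked: given a sequence of conditions with supports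
of bounded size, a finite set `v` that is maximal among those contained in infinitely many of the
supports plays the role of the root of a Δ-system. A linking condition for the restrictions to `v`,
extended in any way to the whole product, links the original sequence, because the support of a
condition meets only finitely many of the supports containing `v` outside `v`.
-/

open Cardinal Filter

section EngelkingKarlowicz

/-- `H` is dense in `I → Z` for the product of the discrete topologies: its members extend all
finite partial functions. -/
def FinitelyDense {I Z : Type*} (H : Set (I → Z)) : Prop :=
  ∀ (g : I → Z) (s : Finset I), ∃ h ∈ H, Set.EqOn h g s

variable {I M X Z : Type u} {μ : Cardinal.{u}}

theorem mk_finsupp_le [Zero Z] (hμ : ℵ₀ ≤ μ) (hX : #X ≤ μ) (hZ : #Z ≤ μ) : #(X →₀ Z) ≤ μ := by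
  classical
  calc #(X →₀ Z) ≤ #(Finset (X × Z)) := mk_le_of_injective (Finsupp.graph_injective X Z)
    _ ≤ #(List (X × Z)) := mk_le_of_surjective List.toFinset_surjective
    _ ≤ max ℵ₀ #(X × Z) := mk_list_le_max _
    _ ≤ μ := max_le hμ (mul_def X Z ▸ mul_le_of_le hμ hX hZ)

theorem finitelyDense_range_finsupp [Zero Z] :
    FinitelyDense (Set.range ((⇑) : (X →₀ Z) → X → Z)) := fun g s =>
  ⟨_, ⟨Finsupp.indicator s fun x _ => g x, rfl⟩, fun _ hx => Finsupp.indicator_of_mem hx _⟩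

open Classical in
/-- The trace `e i ∩ F` on a finite set `F` of the subset of `M` coding `i`. Finitely many
indices are told apart by their traces on a suitable `F`. -/
noncomputable def finiteTrace (e : I → Set M) (F : Finset M) (i : I) : Finset M :=
  F.filter (· ∈ e i)

theorem eventually_finiteTrace_ne {e : I → Set M} {i j : I} (hij : e i ≠ e j) :
    ∀ᶠ F in atTop, finiteTrace e F i ≠ finiteTrace e F j := by
  obtain ⟨m, hm⟩ : ∃ m, ¬(m ∈ e i ↔ m ∈ e j) := by
    simpa only [ne_eq, Set.ext_iff, not_forall] using hij
  filter_upwards [eventually_ge_atTop {m}] with F hF htrace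
  have hmF : m ∈ F := Finset.singleton_subset_iff.1 hF
  exact hm (by simpa [finiteTrace, hmF] using Finset.ext_iff.1 htrace m)

theorem exists_injOn_finiteTrace {e : I → Set M} (he : Function.Injective e) (s : Finset I) :
    ∃ F : Finset M, Set.InjOn (finiteTrace e F) s := by
  have hsep : ∀ᶠ F in atTop, ∀ i ∈ s, ∀ j ∈ s, i ≠ j →
      finiteTrace e F i ≠ finiteTrace e F j := by
    simp only [eventually_all_finset, eventually_imp_distrib_left]
    exact fun i _ j _ hij => eventually_finiteTrace_ne (he.ne hij)
  obtain ⟨F, hF⟩ := hsep.exists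
  exact ⟨F, fun i hi j hj => not_imp_not.1 (hF i hi j hj)⟩

theorem FinitelyDense.image2_comp_finiteTrace {e : I → Set M} (he : Function.Injective e)
    {H : Set (Finset M → Z)} (hH : FinitelyDense H) [Nonempty Z] :
    FinitelyDense (Set.image2 (fun F h => h ∘ finiteTrace e F) Set.univ H) := by
  classical
  intro g s
  obtain ⟨F, hF⟩ := exists_injOn_finiteTrace he s
  obtain ⟨g', hg'⟩ : ∃ g' : Finset M → Z, ∀ i ∈ s, g' (finiteTrace e F i) = g i := by
    obtain ⟨g', hg'⟩ := (Set.injOn_iff_injective.1 hF).surjective_comp_right (γ := Z) (s.restrict g)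
    exact ⟨g', fun i hi => congrFun hg' ⟨i, hi⟩⟩
  obtain ⟨h, hh, hhg⟩ := hH g' (s.image (finiteTrace e F))
  exact ⟨_, ⟨F, Set.mem_univ F, h, hh, rfl⟩, fun i hi =>
    (hhg (Finset.mem_image_of_mem _ hi)).trans (hg' i hi)⟩

/-- The Engelking–Karłowicz theorem. -/
theorem exists_finitelyDense_mk_le (hμ : ℵ₀ ≤ μ) (hI : #I ≤ 2 ^ μ) (hZ : #Z ≤ μ) :
    ∃ H : Set (I → Z), #H ≤ μ ∧ FinitelyDense H := by
  induction μ using Cardinal.inductionOn with | _ M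
  have : Infinite M := infinite_iff.2 hμ
  obtain ⟨e⟩ : Nonempty (I ↪ Set M) := by rwa [← mk_set] at hI
  rcases isEmpty_or_nonempty Z with _ | _
  · exact ⟨Set.univ, (mk_le_one_iff_set_subsingleton.2 Set.subsingleton_of_subsingleton).trans
      (one_le_aleph0.trans hμ), fun g _ => ⟨g, Set.mem_univ g, Set.eqOn_refl g _⟩⟩
  let : Zero Z := ⟨Classical.arbitrary Z⟩
  have hFinset : #(Finset M) ≤ #M := (mk_finset_of_infinite M).le
  exact ⟨_, mk_image2_le.trans (mul_le_of_le hμ (mk_univ.trans_le hFinset)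
      (mk_range_le.trans (mk_finsupp_le hμ hFinset hZ))),
    finitelyDense_range_finsupp.image2_comp_finiteTrace e.injective⟩

end EngelkingKarlowicz

theorem exists_maximal_infinite_setOf_subset {α I : Type*} [Infinite α] {w : α → Finset I} {k : ℕ}
    (hw : ∀ a, (w a).card ≤ k) : ∃ v, Maximal (fun v => {a | v ⊆ w a}.Infinite) v := by
  let 𝒱 : Set (Finset I) := {v | {a | v ⊆ w a}.Infinite}
  have hcard : Finset.card '' 𝒱 ⊆ Set.Iic k := by
    rintro _ ⟨v, hv, rfl⟩
    obtain ⟨a, ha⟩ := Set.Infinite.nonempty hv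
    exact (Finset.card_le_card ha).trans (hw a)
  have hempty : ∅ ∈ 𝒱 := by simp [𝒱, Set.infinite_univ]
  obtain ⟨v, hv, hmax⟩ :=
    Set.Finite.exists_maximalFor' Finset.card 𝒱 ((Set.finite_Iic k).subset hcard) ⟨∅, hempty⟩
  exact ⟨v, hv, fun v' hv' hle =>
    (Finset.eq_of_subset_of_card_le hle (hmax hv' (Finset.card_le_card hle))).ge⟩

theorem finite_setOf_not_inter_subset_of_maximal {α I : Type*} [DecidableEq I] {w : α → Finset I}
    {v : Finset I} (hv : Maximal (fun v => {a | v ⊆ w a}.Infinite) v) (t : Finset I) :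
    {a | v ⊆ w a ∧ ¬t ∩ w a ⊆ v}.Finite := by
  have hfin : ∀ i ∉ v, {a | insert i v ⊆ w a}.Finite := fun i hi =>
    Set.not_infinite.1 fun hinf =>
      hi (hv.le_of_ge hinf (Finset.subset_insert i v) (Finset.mem_insert_self i v))
  refine ((t \ v).finite_toSet.biUnion fun i hi => hfin i (Finset.mem_sdiff.1 hi).2).subset ?_
  rintro a ⟨hva, hta⟩
  obtain ⟨i, hi, hiv⟩ := Finset.not_subset.1 hta
  rw [Finset.mem_inter] at hi
  exact Set.mem_biUnion (Finset.mem_sdiff.2 ⟨hi.1, hiv⟩) (Finset.insert_subset hi.2 hva)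

section FrLinked

variable {P : Type u} [Preorder P]

theorem FrLinked.exists_forall_infinite_inter {Q : Set P} (hQ : FrLinked Q) {A : Set ℕ}
    (hA : A.Infinite) {p : ℕ → P} (hp : ∀ n ∈ A, p n ∈ Q) :
    ∃ q, ∀ r ≤ q, (A ∩ {n | Compat r (p n)}).Infinite := by
  have hmem : ∀ n, Nat.nth (· ∈ A) n ∈ A := Nat.nth_mem_of_infinite hA
  obtain ⟨q, hq⟩ := hQ (p ∘ Nat.nth (· ∈ A)) fun n => hp _ (hmem n)
  refine ⟨q, fun r hr => ((hq r hr).image (Nat.nth_injective hA).injOn).mono ?_⟩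
  rintro _ ⟨n, hn, rfl⟩
  exact ⟨hmem n, hn⟩

theorem muFrLinked_of_forall_exists_mem {μ : Cardinal.{u}} {T : Type u} (hT : #T ≤ μ)
    {A : T → Set P} (hcov : ∀ p, ∃ t, p ∈ A t) (hlink : ∀ t, FrLinked (A t)) : MuFrLinked μ P :=
  ⟨Set.range A, mk_range_le.trans hT, by simpa [Set.eq_univ_iff_forall] using hcov,
    Set.forall_mem_range.2 hlink⟩

end FrLinked

/-- The finite-support product, in the form of a subtype of the full product. -/
abbrev FSProd {I : Type u} (Q : I → Type u) [∀ i, Preorder (Q i)] [∀ i, OrderTop (Q i)] : Type u :=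
  {f : ∀ i, Q i // {i : I | f i ≠ ⊤}.Finite}

namespace FSProd

variable {I : Type u} {Q : I → Type u} [∀ i, Preorder (Q i)] [∀ i, OrderTop (Q i)]

/-- The support of a condition: the finite set of coordinates where it is not `⊤`. -/
noncomputable def supp (f : FSProd Q) : Finset I := f.2.toFinset

theorem mem_supp {f : FSProd Q} {i : I} : i ∈ f.supp ↔ f.1 i ≠ ⊤ := f.2.mem_toFinset

theorem notMem_supp {f : FSProd Q} {i : I} : i ∉ f.supp ↔ f.1 i = ⊤ := mem_supp.not_left

open Classical in
/-- The condition that agrees with `c` on `v` and with `f` elsewhere: both linking conditions and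
common extensions arise by overriding a given condition on a root `v`. -/
noncomputable def override (f : FSProd Q) (v : Finset I) (c : ∀ i : v, Q i) : FSProd Q :=
  ⟨fun i => if h : i ∈ v then c ⟨i, h⟩ else f.1 i, (v ∪ f.supp).finite_toSet.subset fun i hi => by
    by_contra hnot
    simp_all [mem_supp]⟩

theorem override_of_mem (f : FSProd Q) {v : Finset I} (c : ∀ i : v, Q i) {i : I} (hi : i ∈ v) :
    (f.override v c).1 i = c ⟨i, hi⟩ := dif_pos hi

theorem override_of_notMem (f : FSProd Q) {v : Finset I} (c : ∀ i : v, Q i) {i : I} (hi : i ∉ v) :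
    (f.override v c).1 i = f.1 i := dif_neg hi

theorem override_le {f g : FSProd Q} {v : Finset I} {c : ∀ i : v, Q i} (hc : c ≤ v.restrict g.1)
    (hf : ∀ i ∉ v, f.1 i ≤ g.1 i) : f.override v c ≤ g := fun i => by
  by_cases hi : i ∈ v
  · exact (override_of_mem f c hi).trans_le (hc ⟨i, hi⟩)
  · exact (override_of_notMem f c hi).trans_le (hf i hi)

theorem restrict_le_of_le_override {f r : FSProd Q} {v : Finset I} {c : ∀ i : v, Q i}
    (hr : r ≤ f.override v c) : v.restrict r.1 ≤ c := fun i =>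
  (hr i).trans_eq (override_of_mem f c i.2)

theorem compat_of_compat_restrict [DecidableEq I] {r p : FSProd Q} {v : Finset I}
    (hv : r.supp ∩ p.supp ⊆ v) (h : Compat (v.restrict r.1) (v.restrict p.1)) : Compat r p := by
  obtain ⟨c, hcr, hcp⟩ := h
  let f : FSProd Q := p.override r.supp (r.supp.restrict r.1)
  refine ⟨f.override v c, override_le hcr fun i _ => ?_, override_le hcp fun i hiv => ?_⟩
  · by_cases hir : i ∈ r.supp
    · exact (override_of_mem p _ hir).le
    · exact le_top.trans_eq (notMem_supp.1 hir).symm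
  · by_cases hir : i ∈ r.supp
    · have hip : i ∉ p.supp := fun hip => hiv (hv (Finset.mem_inter.2 ⟨hir, hip⟩))
      exact le_top.trans_eq (notMem_supp.1 hip).symm
    · exact (override_of_notMem p _ hir).le

/-- The conditions with support of size at most `k` whose nontrivial coordinates lie in the
prescribed sets `B i`. These are the Fr-linked pieces of the finite-support product. -/
def boundedBox (B : ∀ i, Set (Q i)) (k : ℕ) : Set (FSProd Q) :=
  {f | f.supp.card ≤ k ∧ ∀ i ∈ f.supp, f.1 i ∈ B i}

theorem frLinked_boundedBox {B : ∀ i, Set (Q i)}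
    (hB : ∀ v : Finset I, FrLinked {f : ∀ i : v, Q i | ∀ i : v, f i ∈ B i}) (k : ℕ) :
    FrLinked (boundedBox B k) := by
  classical
  intro p hp
  obtain ⟨v, hv⟩ := exists_maximal_infinite_setOf_subset fun n => (hp n).1
  obtain ⟨q, hq⟩ := (hB v).exists_forall_infinite_inter hv.prop
    (p := fun n => v.restrict (p n).1) fun n hn i => (hp n).2 i (hn i.2)
  refine ⟨(p 0).override v q, fun r hr => ?_⟩
  have hcompat := hq _ (restrict_le_of_le_override hr)
  have hmeet := finite_setOf_not_inter_subset_of_maximal hv r.supp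
  refine (hcompat.sdiff hmeet).mono ?_
  rintro n ⟨⟨hvn, hn⟩, hnot⟩
  exact compat_of_compat_restrict (not_not.1 fun h => hnot ⟨hvn, h⟩) hn

theorem exists_mem_boundedBox {Z : Type*} {K : ∀ i, Z → Set (Q i)}
    (hcov : ∀ i x, ∃ z, x ∈ K i z) {H : Set (I → Z)} (hH : FinitelyDense H) (f : FSProd Q) :
    ∃ h ∈ H, f ∈ boundedBox (fun i => K i (h i)) f.supp.card := by
  choose g hg using fun i => hcov i (f.1 i)
  obtain ⟨h, hhH, hhg⟩ := hH g f.supp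
  exact ⟨h, hhH, le_rfl, fun i hi => by simpa only [hhg hi] using hg i⟩

end FSProd

/-- Let `μ` be an infinite cardinal and `(Q_i)_{i ∈ I}` a family of
preorders, each with a greatest element, with `|I| ≤ 2^μ`. Suppose each `Q_i` is
`μ`-Fr-linked as witnessed by a covering `Q_i = ⋃_{ζ < μ} Q_{i,ζ}` by Fr-linked sets,
and suppose that for every finite `u ⊆ I` and every `s : u → μ` the set
`∏_{i ∈ u} Q_{i,s(i)}` is Fr-linked in `∏_{i ∈ u} Q_i` (ordered coordinatewise).
Then the finite-support product of `(Q_i)_{i ∈ I}` is `μ`-Fr-linked. -/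
theorem stmt_16 {I : Type u} (Q : I → Type u) [∀ i, Preorder (Q i)] [∀ i, OrderTop (Q i)]
    (μ : Cardinal.{u}) (hμ : Cardinal.aleph0 ≤ μ)
    (hI : Cardinal.mk I ≤ 2 ^ μ)
    (Z : Type u) (hZ : Cardinal.mk Z ≤ μ)
    (K : (i : I) → Z → Set (Q i))
    (hcov : ∀ (i : I) (x : Q i), ∃ z : Z, x ∈ K i z)
    (hlink : ∀ (i : I) (z : Z), FrLinked (K i z))
    (hprod : ∀ (u : Finset I) (s : (i : u) → Z),
      FrLinked {f : ∀ i : u, Q i | ∀ i : u, f i ∈ K i (s i)}) :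
    MuFrLinked μ {f : ∀ i, Q i // {i : I | f i ≠ ⊤}.Finite} := by
  obtain ⟨H, hHcard, hHdense⟩ := exists_finitelyDense_mk_le hμ hI hZ
  refine muFrLinked_of_forall_exists_mem (T := H × ULift.{u} ℕ)
    (A := fun t => FSProd.boundedBox (fun i => K i (t.1.1 i)) t.2.down) ?_ (fun f => ?_)
    fun t => FSProd.frLinked_boundedBox (fun v => hprod v fun i => t.1.1 i) _
  · rw [← mul_def]
    exact mul_le_of_le hμ hHcard (by simpa using hμ)
  · obtain ⟨h, hh, hf⟩ := FSProd.exists_mem_boundedBox hcov hHdense f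
    exact ⟨(⟨h, hh⟩, ⟨_⟩), hf⟩
end

section
/- Let κ be an infinite cardinal, let A be a κ-strong-Md family, and let A'' ⊆ A with |A''| ≥ κ. Then the set of k ∈ ℕ for which there exists F ∈ [A]^{<ω} such that for every l ≥ k there is a ∈ A'' with [k,l) ∖ ⋃F ⊆ a, is infinite. -/
/-- The relation `x ⊏* h` of the relational system `Md(A)`: for all but finitely many
`n ∈ ℕ` and every finite `F ⊆ A`, the set `[n, h(n,F)) ∖ ⋃F` is not a subset of `x`. -/
def MdRel (A : Set (Set ℕ)) (x : Set ℕ) (h : ℕ → Finset (Set ℕ) → ℕ) : Prop :=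
  ∃ n₀ : ℕ, ∀ n ≥ n₀, ∀ F : Finset (Set ℕ), ↑F ⊆ A →
    ¬ (Set.Ico n (h n F) \ ⋃₀ (F : Set (Set ℕ)) ⊆ x)

/-!
If only finitely many `k` had the stated property, then beyond some `N` every pair `(n, F)` would
admit an `l` such that no member of `A''` contains `[n, l) ∖ ⋃F`. Choosing `h(n, F)` to be such
an `l` gives a single `h` with `a ⊏* h` for all `a ∈ A''`, that is, for at least `κ` members of `A`.
-/

/-- The conclusion of the theorem concerns this set of starting points: `k` is captured if, after
deleting one fixed finite union of members of `A`, every interval `[k, l)` lies in a member of `B`.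
The member of `B` may depend on `l`; the finite union may not. -/
def captureSet (A B : Set (Set ℕ)) : Set ℕ :=
  {k | ∃ F : Finset (Set ℕ), ↑F ⊆ A ∧
    ∀ l ≥ k, ∃ b ∈ B, Set.Ico k l \ ⋃₀ (F : Set (Set ℕ)) ⊆ b}

section

variable {A B : Set (Set ℕ)}

theorem exists_forall_not_subset_of_notMem_captureSet {k : ℕ} (hk : k ∉ captureSet A B)
    {F : Finset (Set ℕ)} (hF : ↑F ⊆ A) :
    ∃ l, ∀ b ∈ B, ¬ Set.Ico k l \ ⋃₀ (F : Set (Set ℕ)) ⊆ b := by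
  by_contra! hcapture
  exact hk ⟨F, hF, fun l _ => hcapture l⟩

theorem exists_forall_mdRel_of_finite_captureSet (hfin : (captureSet A B).Finite) :
    ∃ h, ∀ b ∈ B, MdRel A b h := by
  obtain ⟨N, hN⟩ := hfin.bddAbove
  have exists_escape (n : ℕ) (F : Finset (Set ℕ)) : ∃ l, N < n → ↑F ⊆ A →
      ∀ b ∈ B, ¬ Set.Ico n l \ ⋃₀ (F : Set (Set ℕ)) ⊆ b := by
    by_cases hnF : N < n ∧ ↑F ⊆ A
    · have hn : n ∉ captureSet A B := fun hmem => (hN hmem).not_gt hnF.1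
      obtain ⟨l, hl⟩ := exists_forall_not_subset_of_notMem_captureSet hn hnF.2
      exact ⟨l, fun _ _ => hl⟩
    · exact ⟨0, fun hn hF => absurd ⟨hn, hF⟩ hnF⟩
  choose h hescape using exists_escape
  exact ⟨h, fun b hb => ⟨N + 1, fun n hn F hF => hescape n F hn hF b hb⟩⟩

end

theorem stmt_17_general (κ : Cardinal.{0}) (A : Set (Set ℕ))
    (hMd : ∀ h : ℕ → Finset (Set ℕ) → ℕ,
      Cardinal.mk {a : Set ℕ // a ∈ A ∧ MdRel A a h} < κ)
    (B : Set (Set ℕ)) (hBA : B ⊆ A) (hBcard : κ ≤ Cardinal.mk B) :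
    (captureSet A B).Infinite := by
  intro hfin
  obtain ⟨h, hB⟩ := exists_forall_mdRel_of_finite_captureSet hfin
  have hB_subset : B ⊆ {a | a ∈ A ∧ MdRel A a h} := fun b hb => ⟨hBA hb, hB b hb⟩
  exact (hBcard.trans (Cardinal.mk_le_mk_of_subset hB_subset)).not_gt (hMd h)

/-- Let `κ` be an infinite cardinal, `A` a `κ`-strong-`Md` family
(an infinite family of infinite subsets of `ℕ` with `|A| ≥ κ` such that for every
`h : ℕ × [A]^{<ω} → ℕ`, `|{a ∈ A : a ⊏* h}| < κ`), and `A'' ⊆ A` with `|A''| ≥ κ`.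
Then the set of `k ∈ ℕ` for which there exists `F ∈ [A]^{<ω}` such that for every
`l ≥ k` there is `a ∈ A''` with `[k,l) ∖ ⋃F ⊆ a`, is infinite. -/
theorem stmt_17 (κ : Cardinal.{0}) (hκ : Cardinal.aleph0 ≤ κ)
    (A : Set (Set ℕ)) (hAinf : ∀ a ∈ A, a.Infinite)
    (hAcard : κ ≤ Cardinal.mk A)
    (hMd : ∀ h : ℕ → Finset (Set ℕ) → ℕ,
      Cardinal.mk {a : Set ℕ // a ∈ A ∧ MdRel A a h} < κ)
    (A'' : Set (Set ℕ)) (hsub : A'' ⊆ A) (hA''card : κ ≤ Cardinal.mk A'') :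
    {k : ℕ | ∃ F : Finset (Set ℕ), ↑F ⊆ A ∧
      ∀ l ≥ k, ∃ a ∈ A'', Set.Ico k l \ ⋃₀ (F : Set (Set ℕ)) ⊆ a}.Infinite :=
  stmt_17_general κ A hMd A'' hsub hA''card
end
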